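/- arXiv:2105.08558 — 4 statements merged into one kernel-verified Lean document; each statement's English description precedes it below -/
import Mathlib

section
/- Let ℓ > 0 and let α : [0, ℓ/4] → ℝ³ be continuous. Then the ℓ-periodic extension g of the glued map is continuous on all of ℝ if and only if α(0) ∈ ℝe₃ and α(ℓ/4) ∈ ℝe₁. -/
/-!
A periodic curve is continuous iff it is continuous on each of the closed quarters of a period. On
such a quarter the glued map agrees, except possibly at the right endpoint, with the continuous arc
`Rᵢ ∘ α ∘ ψᵢ`, so continuity there amounts to one equation at the endpoint. The equations at `ℓ/4`,
`ℓ/2`, `3ℓ/4`, `ℓ` are `R₁p = p`, `R₂q = R₁q`, `R₃p = R₂p`, `q = R₃q` with `p = α(ℓ/4)`, `q = α(0)`.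
As `R₁R₂ = R₃` and its permutations hold, they say exactly that `R₁p = p` and `R₃q = q`, and the
fixed points of `Rᵢ` are the points of `ℝeᵢ`.
-/

noncomputable section

open Real Set

/-- Euclidean three-space. -/
abbrev E3 : Type := EuclideanSpace ℝ (Fin 3)

/-- The vector (a,b,c) ∈ ℝ³ (with the Euclidean norm). -/
def vec3 (a b c : ℝ) : E3 := (WithLp.equiv 2 (Fin 3 → ℝ)).symm ![a, b, c]

/-- The standard basis vectors. -/
def e1 : E3 := vec3 1 0 0
def e2 : E3 := vec3 0 1 0
def e3 : E3 := vec3 0 0 1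

/-- The rotations `R₁, R₂, R₃` by angle π about the coordinate axes `ℝe₁, ℝe₂, ℝe₃`
(indexed by `0, 1, 2 : Fin 3`). -/
def Rot : Fin 3 → E3 → E3 :=
  ![fun x => vec3 (x 0) (-x 1) (-x 2),
    fun x => vec3 (-x 0) (x 1) (-x 2),
    fun x => vec3 (-x 0) (-x 1) (x 2)]

/-- The dihedral parameter transformations `ψ₁^ℓ(t) = ℓ/2 - t`, `ψ₂^ℓ(t) = t - ℓ/2`,
`ψ₃^ℓ(t) = ℓ - t` (indexed by `0, 1, 2 : Fin 3`). -/
def psi (ℓ : ℝ) : Fin 3 → ℝ → ℝ :=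
  ![fun t => ℓ / 2 - t, fun t => t - ℓ / 2, fun t => ℓ - t]

/-- An `ℓ`-periodic curve `γ : ℝ → ℝ³` is D₂-symmetric if `Rᵢ(γ(ψᵢ^ℓ(t))) = γ(t)`
for all `t ∈ ℝ` and `i = 1,2,3`. -/
def DihedralSymmetric (ℓ : ℝ) (γ : ℝ → E3) : Prop :=
  ∀ i : Fin 3, ∀ t : ℝ, Rot i (γ (psi ℓ i t)) = γ t

/-- The `ℓ`-periodic extension of the glued map built from a generating arc `α`:
`g(t) = α(t)` on `[0, ℓ/4)`, `g(t) = Rᵢ(α(ψᵢ^ℓ(t)))` on `[iℓ/4, (i+1)ℓ/4)` for `i = 1,2,3`,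
extended `ℓ`-periodically. -/
def glue (ℓ : ℝ) (α : ℝ → E3) (t : ℝ) : E3 :=
  let s := t - ℓ * (⌊t / ℓ⌋ : ℝ)
  if s < ℓ / 4 then α s
  else if s < ℓ / 2 then Rot 0 (α (psi ℓ 0 s))
  else if s < 3 * ℓ / 4 then Rot 1 (α (psi ℓ 1 s))
  else Rot 2 (α (psi ℓ 2 s))

section Continuity

variable {K X : Type*} [TopologicalSpace K] [LinearOrder K] [TopologicalSpace X]

lemma continuousOn_Icc_iff_and [OrderClosedTopology K] {f : K → X} {a b c : K} (hab : a ≤ b)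
    (hbc : b ≤ c) :
    ContinuousOn f (Icc a c) ↔ ContinuousOn f (Icc a b) ∧ ContinuousOn f (Icc b c) := by
  rw [← Icc_union_Icc_eq_Icc hab hbc, continuousOn_union_iff_of_isClosed isClosed_Icc isClosed_Icc]

lemma continuousOn_Icc_iff_eq_right_of_eqOn_Ico [OrderTopology K] [DenselyOrdered K]
    [T2Space X] {f g : K → X} {a b : K} (hab : a < b) (hf : ContinuousOn f (Icc a b))
    (hgf : EqOn g f (Ico a b)) :
    ContinuousOn g (Icc a b) ↔ g b = f b := by
  constructor
  · intro hg
    exact hgf.of_subset_closure hg hf Ico_subset_Icc_self (closure_Ico hab.ne).ge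
      (right_mem_Icc.2 hab.le)
  · intro hb
    refine hf.congr fun t ht => ?_
    rcases ht.2.eq_or_lt with rfl | htb
    · exact hb
    · exact hgf ⟨ht.1, htb⟩

lemma continuous_iff_continuousOn_Icc_of_periodic [OrderTopology K] [AddCommGroup K]
    [IsOrderedAddMonoid K] [Archimedean K] {f : K → X} {p : K} (hf : Function.Periodic f p)
    (hp : 0 < p) (a : K) :
    Continuous f ↔ ContinuousOn f (Icc a (a + p)) := by
  refine ⟨Continuous.continuousOn, fun hfa => ?_⟩
  have : Fact (0 < p) := ⟨hp⟩
  have hlift : AddCircle.liftIco p a f = hf.lift :=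
    AddCircle.Ico_ext p a fun _ ht => AddCircle.liftIco_coe_apply ht
  have hcont : Continuous hf.lift := hlift ▸ AddCircle.liftIco_continuous (hf a).symm hfa
  exact hcont.comp (AddCircle.continuous_mk' p)

end Continuity

lemma Rot_apply (i j : Fin 3) (x : E3) : Rot i x j = if j = i then x j else -x j := by
  fin_cases i <;> fin_cases j <;> simp [Rot, vec3]

lemma continuous_Rot (i : Fin 3) : Continuous (Rot i) := by
  refine (PiLp.homeomorph 2 _).comp_continuous_iff.1 (continuous_pi fun j => ?_)
  change Continuous fun x => Rot i x j
  simp only [Rot_apply]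
  split_ifs <;> fun_prop

lemma Rot_involutive (i : Fin 3) : Function.Involutive (Rot i) := by
  intro x
  ext j
  simp only [Rot_apply]
  split_ifs <;> simp only [neg_neg]

lemma Rot_Rot {i j k : Fin 3} (hij : i ≠ j) (hik : i ≠ k) (hjk : j ≠ k) (x : E3) :
    Rot i (Rot j x) = Rot k x := by
  ext m
  simp only [Rot_apply]
  grind

lemma Rot_eq_Rot_iff {i j k : Fin 3} (hij : i ≠ j) (hik : i ≠ k) (hjk : j ≠ k) (x : E3) :
    Rot i x = Rot j x ↔ Rot k x = x := by
  rw [(Rot_involutive i).eq_iff, Rot_Rot hij hik hjk, eq_comm]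

lemma Rot_eq_self_iff (i : Fin 3) (x : E3) :
    Rot i x = x ↔ ∃ c : ℝ, x = c • EuclideanSpace.single i 1 := by
  constructor
  · intro hx
    refine ⟨x i, ?_⟩
    ext j
    have hj : Rot i x j = x j := by rw [hx]
    rw [Rot_apply] at hj
    by_cases hji : j = i
    · simp [hji]
    · rw [if_neg hji, neg_eq_self] at hj
      simp [hji, hj]
  · rintro ⟨c, rfl⟩
    ext j
    by_cases hji : j = i <;> simp [Rot_apply, hji]

lemma e1_eq_single : e1 = EuclideanSpace.single 0 1 := by
  ext j
  fin_cases j <;> simp [e1, vec3]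

lemma e3_eq_single : e3 = EuclideanSpace.single 2 1 := by
  ext j
  fin_cases j <;> simp [e3, vec3]

section Glue

variable {ℓ : ℝ} (α : ℝ → E3)

lemma glue_periodic : Function.Periodic (glue ℓ α) ℓ := by
  intro t
  rcases eq_or_ne ℓ 0 with rfl | hℓ
  · rw [add_zero]
  have hfloor : ⌊(t + ℓ) / ℓ⌋ = ⌊t / ℓ⌋ + 1 := by
    rw [add_div, div_self hℓ, Int.floor_add_one]
  have hs : t + ℓ - ℓ * ((⌊t / ℓ⌋ + 1 : ℤ) : ℝ) = t - ℓ * (⌊t / ℓ⌋ : ℝ) := by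
    push_cast
    ring
  simp only [glue, hfloor, hs]

lemma glue_of_mem_Ico {t : ℝ} (ht : t ∈ Ico 0 ℓ) :
    glue ℓ α t =
      if t < ℓ / 4 then α t
      else if t < ℓ / 2 then Rot 0 (α (psi ℓ 0 t))
      else if t < 3 * ℓ / 4 then Rot 1 (α (psi ℓ 1 t))
      else Rot 2 (α (psi ℓ 2 t)) := by
  have hℓ : 0 < ℓ := ht.1.trans_lt ht.2
  have hfloor : ⌊t / ℓ⌋ = 0 :=
    Int.floor_eq_zero_iff.2 ⟨div_nonneg ht.1 hℓ.le, (div_lt_one hℓ).2 ht.2⟩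
  simp only [glue, hfloor, Int.cast_zero, mul_zero, sub_zero]

/-- The parameter `kℓ/4` at which two consecutive arcs of the glued curve meet. On
`[junction ℓ (i + 1), junction ℓ (i + 2)]`, with `i : Fin 3`, the curve is built from `Rot i`. -/
def junction (ℓ : ℝ) (k : ℕ) : ℝ := k * (ℓ / 4)

lemma junction_zero (ℓ : ℝ) : junction ℓ 0 = 0 := by simp [junction]

lemma junction_one (ℓ : ℝ) : junction ℓ 1 = ℓ / 4 := by simp [junction]

lemma junction_two (ℓ : ℝ) : junction ℓ 2 = ℓ / 2 := by
  rw [junction]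
  push_cast
  ring

lemma junction_three (ℓ : ℝ) : junction ℓ 3 = 3 * ℓ / 4 := by
  rw [junction]
  push_cast
  ring

lemma junction_four (ℓ : ℝ) : junction ℓ 4 = ℓ := by
  rw [junction]
  push_cast
  ring

lemma junction_strictMono (hℓ : 0 < ℓ) : StrictMono (junction ℓ) := by
  intro k m hkm
  exact mul_lt_mul_of_pos_right (Nat.cast_lt.2 hkm) (by positivity)

lemma eqOn_glue_self : EqOn (glue ℓ α) α (Ico 0 (ℓ / 4)) := by
  rintro t ⟨h0, h1⟩
  rw [glue_of_mem_Ico α ⟨h0, by linarith⟩, if_pos h1]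

lemma eqOn_glue_Rot_psi (i : Fin 3) :
    EqOn (glue ℓ α) (fun t => Rot i (α (psi ℓ i t)))
      (Ico (junction ℓ (i + 1)) (junction ℓ (i + 2))) := by
  rintro t ⟨hl, hr⟩
  obtain rfl | rfl | rfl : i = 0 ∨ i = 1 ∨ i = 2 := by lia
  all_goals norm_num [junction] at hl hr
  · rw [glue_of_mem_Ico α ⟨by linarith, by linarith⟩, if_neg (by linarith), if_pos (by linarith)]
  · rw [glue_of_mem_Ico α ⟨by linarith, by linarith⟩, if_neg (by linarith), if_neg (by linarith),
      if_pos (by linarith)]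
  · rw [glue_of_mem_Ico α ⟨by linarith, by linarith⟩, if_neg (by linarith), if_neg (by linarith),
      if_neg (by linarith)]

lemma continuous_psi (i : Fin 3) : Continuous (psi ℓ i) := by
  fin_cases i
  exacts [continuous_sub_left (ℓ / 2), continuous_sub_right (ℓ / 2), continuous_sub_left ℓ]

lemma mapsTo_psi (i : Fin 3) :
    MapsTo (psi ℓ i) (Icc (junction ℓ (i + 1)) (junction ℓ (i + 2))) (Icc 0 (ℓ / 4)) := by
  rintro t ⟨hl, hr⟩
  fin_cases i <;> norm_num [psi, junction] at hl hr ⊢ <;> constructor <;> linarith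

lemma glue_junction (hℓ : 0 < ℓ) (i : Fin 3) :
    glue ℓ α (junction ℓ (i + 1)) = Rot i (α (psi ℓ i (junction ℓ (i + 1)))) :=
  eqOn_glue_Rot_psi α i (left_mem_Ico.2 (junction_strictMono hℓ (by lia)))

lemma glue_quarter (hℓ : 0 < ℓ) : glue ℓ α (ℓ / 4) = Rot 0 (α (ℓ / 4)) := by
  have hpsi : psi ℓ 0 (ℓ / 4) = ℓ / 4 := show ℓ / 2 - ℓ / 4 = ℓ / 4 by ring
  simpa [junction_one, hpsi] using glue_junction α hℓ 0

lemma glue_half (hℓ : 0 < ℓ) : glue ℓ α (ℓ / 2) = Rot 1 (α 0) := by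
  have hpsi : psi ℓ 1 (ℓ / 2) = 0 := sub_self (ℓ / 2)
  simpa [junction_two, hpsi] using glue_junction α hℓ 1

lemma glue_three_quarters (hℓ : 0 < ℓ) : glue ℓ α (3 * ℓ / 4) = Rot 2 (α (ℓ / 4)) := by
  have hpsi : psi ℓ 2 (3 * ℓ / 4) = ℓ / 4 := show ℓ - 3 * ℓ / 4 = ℓ / 4 by ring
  simpa [junction_three, hpsi] using glue_junction α hℓ 2

lemma glue_period (hℓ : 0 < ℓ) : glue ℓ α ℓ = α 0 := by
  rw [(glue_periodic α).eq]
  exact eqOn_glue_self α ⟨le_rfl, by positivity⟩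

variable {α}

lemma continuousOn_Rot_psi (hα : ContinuousOn α (Icc 0 (ℓ / 4))) (i : Fin 3) :
    ContinuousOn (fun t => Rot i (α (psi ℓ i t)))
      (Icc (junction ℓ (i + 1)) (junction ℓ (i + 2))) :=
  (continuous_Rot i).comp_continuousOn (hα.comp (continuous_psi i).continuousOn (mapsTo_psi i))

lemma continuousOn_glue_Icc_junction_iff (hℓ : 0 < ℓ) (hα : ContinuousOn α (Icc 0 (ℓ / 4)))
    (i : Fin 3) :
    ContinuousOn (glue ℓ α) (Icc (junction ℓ (i + 1)) (junction ℓ (i + 2))) ↔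
      glue ℓ α (junction ℓ (i + 2)) = Rot i (α (psi ℓ i (junction ℓ (i + 2)))) :=
  continuousOn_Icc_iff_eq_right_of_eqOn_Ico (junction_strictMono hℓ (by lia))
    (continuousOn_Rot_psi hα i) (eqOn_glue_Rot_psi α i)

lemma continuous_glue_iff_continuousOn_Icc_junction (hℓ : 0 < ℓ) :
    Continuous (glue ℓ α) ↔
      ContinuousOn (glue ℓ α) (Icc 0 (ℓ / 4)) ∧
        ∀ i : Fin 3, ContinuousOn (glue ℓ α) (Icc (junction ℓ (i + 1)) (junction ℓ (i + 2))) := by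
  have hmono := (junction_strictMono hℓ).monotone
  have hperiod : junction ℓ 0 + ℓ = junction ℓ 4 := by rw [junction_zero, junction_four, zero_add]
  rw [continuous_iff_continuousOn_Icc_of_periodic (glue_periodic α) hℓ (junction ℓ 0), hperiod,
    continuousOn_Icc_iff_and (hmono zero_le_one) (hmono (show 1 ≤ 4 by lia)),
    continuousOn_Icc_iff_and (hmono one_le_two) (hmono (show 2 ≤ 4 by lia)),
    continuousOn_Icc_iff_and (hmono (show 2 ≤ 3 by lia)) (hmono (show 3 ≤ 4 by lia)),
    Fin.forall_fin_succ, Fin.forall_fin_two, ← junction_one, junction_zero]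
  exact Iff.rfl

lemma continuous_glue_iff_Rot (hℓ : 0 < ℓ) (hα : ContinuousOn α (Icc 0 (ℓ / 4))) :
    Continuous (glue ℓ α) ↔
      Rot 0 (α (ℓ / 4)) = α (ℓ / 4) ∧ Rot 1 (α 0) = Rot 0 (α 0) ∧
        Rot 2 (α (ℓ / 4)) = Rot 1 (α (ℓ / 4)) ∧ α 0 = Rot 2 (α 0) := by
  have hpsi0 : psi ℓ 0 (ℓ / 2) = 0 := sub_self (ℓ / 2)
  have hpsi1 : psi ℓ 1 (3 * ℓ / 4) = ℓ / 4 := show 3 * ℓ / 4 - ℓ / 2 = ℓ / 4 by ring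
  have hpsi2 : psi ℓ 2 ℓ = 0 := sub_self ℓ
  simp only [continuous_glue_iff_continuousOn_Icc_junction hℓ,
    continuousOn_Icc_iff_eq_right_of_eqOn_Ico (show 0 < ℓ / 4 by positivity) hα (eqOn_glue_self α),
    continuousOn_glue_Icc_junction_iff hℓ hα, Fin.forall_fin_succ]
  simp [junction_two, junction_three, junction_four, glue_quarter, glue_half,
    glue_three_quarters, glue_period, hℓ, hpsi0, hpsi1, hpsi2]

end Glue

/-- For continuous `α : [0, ℓ/4] → ℝ³`, the `ℓ`-periodic extension `g` of
the glued map is continuous on all of `ℝ` if and only if `α(0) ∈ ℝe₃` and `α(ℓ/4) ∈ ℝe₁`. -/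
theorem glued_curve_continuous_iff (ℓ : ℝ) (hℓ : 0 < ℓ) (α : ℝ → E3)
    (hcont : ContinuousOn α (Icc 0 (ℓ / 4))) :
    Continuous (glue ℓ α) ↔
      ((∃ c : ℝ, α 0 = c • e3) ∧ (∃ c : ℝ, α (ℓ / 4) = c • e1)) := by
  rw [continuous_glue_iff_Rot hℓ hcont,
    Rot_eq_Rot_iff (i := 1) (j := 0) (k := 2) (by decide) (by decide) (by decide),
    Rot_eq_Rot_iff (i := 2) (j := 1) (k := 0) (by decide) (by decide) (by decide),
    eq_comm (a := α 0) (b := Rot 2 (α 0)), Rot_eq_self_iff, Rot_eq_self_iff, ← e1_eq_single,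
    ← e3_eq_single]
  tauto
end
end

section
/- Symmetry of the arclength parametrization: let ℓ > 0 and let γ : ℝ → ℝ³ be a continuous ℓ-periodic D₂-symmetric curve whose length over one period L := ℒ(γ|[0,ℓ]) is finite and positive. Let s : ℝ → ℝ be the signed arclength function of γ based at 0 (so s(t) = ℒ(γ|[0,t]) for t ≥ 0, s(t) = −ℒ(γ|[t,0]) for t < 0; it satisfies s(t+ℓ) = s(t) + L). If Γ : ℝ → ℝ³ is continuous, L-periodic, and satisfies Γ(s(t)) = γ(t) for all t ∈ ℝ, then Γ is D₂-symmetric with period L, i.e. Rᵢ(Γ(ψᵢ^L(u))) = Γ(u) for all u ∈ ℝ and i = 1, 2, 3. -/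
noncomputable section

open Real Set

/-!
A parameter change `φ` with `R ∘ γ ∘ φ = γ` for an isometry `R` preserves all distances between
points of `γ`, hence the lengths of its arcs; so the signed arclength `s` satisfies
`s ∘ φ = s (φ 0) ± s`, with sign `+` for increasing and `-` for decreasing `φ`. The half-period
translation `ψ₂` cuts a period into two arcs of equal length, so `s (ℓ / 2) = L / 2`, and therefore
`s ∘ ψᵢ^ℓ = ψᵢ^L ∘ s` for each `i`. This is the claimed symmetry of `Γ` at the points `u = s t`,
and every `u` is of this form: `s` is continuous and `s (t + ℓ) = s t + L` with `L > 0`.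
-/

open OrderDual

section Variation

variable {α β E F : Type*} [LinearOrder α] [LinearOrder β]

lemma eVariationOn_eq_of_edist_eq [PseudoEMetricSpace E] [PseudoEMetricSpace F]
    {f : α → E} {g : α → F} (h : ∀ x y, edist (f x) (f y) = edist (g x) (g y)) (S : Set α) :
    eVariationOn f S = eVariationOn g S := by
  simp only [eVariationOn, h]

lemma variationOnFromTo_eq_of_edist_eq [PseudoEMetricSpace E] [PseudoEMetricSpace F]
    {f : α → E} {g : α → F} (h : ∀ x y, edist (f x) (f y) = edist (g x) (g y)) (S : Set α)
    (a b : α) : variationOnFromTo f S a b = variationOnFromTo g S a b := by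
  simp only [variationOnFromTo, eVariationOn_eq_of_edist_eq h]

lemma variationOnFromTo_comp_ofDual [PseudoEMetricSpace E] (f : α → E) (S : Set α) (a b : α) :
    variationOnFromTo (f ∘ ofDual) (ofDual ⁻¹' S) (toDual a) (toDual b) =
      variationOnFromTo f S b a := by
  simp only [variationOnFromTo, Icc_toDual, ← preimage_inter, eVariationOn.comp_ofDual,
    toDual_le_toDual]

lemma variationOnFromTo_comp_eq_neg_of_antitoneOn [PseudoEMetricSpace E] (f : α → E) {φ : β → α}
    {S : Set β} (hφ : AntitoneOn φ S) {x y : β} (hx : x ∈ S) (hy : y ∈ S) :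
    variationOnFromTo (f ∘ φ) S x y = -variationOnFromTo f (φ '' S) (φ x) (φ y) := by
  have hmono : MonotoneOn (φ ∘ ofDual) (ofDual ⁻¹' S) := fun _ ha _ hb hab => hφ hb ha hab
  calc variationOnFromTo (f ∘ φ) S x y
      = -variationOnFromTo (f ∘ φ ∘ ofDual) (ofDual ⁻¹' S) (toDual x) (toDual y) := by
        rw [variationOnFromTo.eq_neg_swap, ← variationOnFromTo_comp_ofDual, Function.comp_assoc]
    _ = -variationOnFromTo f (φ '' S) (φ x) (φ y) := by
        rw [variationOnFromTo.comp_eq_of_monotoneOn (x := toDual x) (y := toDual y) f _ hmono hx hy,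
          image_comp, ofDual.image_preimage]
        rfl

lemma continuous_variationOnFromTo [PseudoMetricSpace E] [TopologicalSpace α] [OrderTopology α]
    {f : α → E} (hf : Continuous f) (hbv : LocallyBoundedVariationOn f univ) (a : α) :
    Continuous (variationOnFromTo f univ a) := by
  refine continuous_iff_continuousAt.2 fun b =>
    continuousAt_iff_continuous_left'_right'.2 ⟨?_, ?_⟩
  · simpa [ContinuousWithinAt] using variationOnFromTo.tendsto_left (mem_univ a) (mem_univ b) hbv
      (hf.continuousAt.tendsto.mono_left nhdsWithin_le_nhds)
  · simpa [ContinuousWithinAt] using variationOnFromTo.tendsto_right (mem_univ a) (mem_univ b) hbv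
      (hf.continuousAt.tendsto.mono_left nhdsWithin_le_nhds)

end Variation

lemma surjective_of_continuous_of_map_add_const {G H : Type*} [AddGroup G] [TopologicalSpace G]
    [PreconnectedSpace G] [AddCommGroup H] [LinearOrder H] [IsOrderedAddMonoid H] [Archimedean H]
    [TopologicalSpace H] [OrderClosedTopology H] {f : G → H} (hf : Continuous f) {a : G} {b : H}
    (hb : 0 < b) (hadd : ∀ x, f (x + a) = f x + b) : Function.Surjective f := by
  intro y
  have hzsmul (n : ℤ) : f (n • a) = f 0 + n • b := by
    simpa using AddConstMapClass.map_add_zsmul (⟨f, hadd⟩ : AddConstMap G H a b) 0 n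
  obtain ⟨n, ⟨hle, hlt⟩, -⟩ := existsUnique_sub_zsmul_mem_Ico hb y (f 0)
  refine mem_range_of_exists_le_of_exists_ge hf ⟨n • a, ?_⟩ ⟨(n + 1) • a, ?_⟩
  · rw [hzsmul]
    exact le_sub_iff_add_le.1 hle
  · rw [hzsmul, add_one_zsmul, ← add_assoc, add_right_comm]
    exact (sub_lt_iff_lt_add.1 hlt).le

/-- A parameter change `φ` is a symmetry of the curve `γ` if it preserves the distance between any
two points of the curve. Unlike an equation `R ∘ γ ∘ φ = γ`, this does not name an isometry `R` of
the ambient space; it retains exactly what determines the lengths of arcs. -/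
def IsCurveSymmetry {α E : Type*} [PseudoEMetricSpace E] (γ : α → E) (φ : α → α) : Prop :=
  ∀ x y, edist (γ (φ x)) (γ (φ y)) = edist (γ x) (γ y)

namespace IsCurveSymmetry

variable {α E : Type*} [PseudoEMetricSpace E] {γ : α → E} {φ : α → α}

lemma of_isometry {R : E → E} (hR : Isometry R) (h : ∀ t, R (γ (φ t)) = γ t) :
    IsCurveSymmetry γ φ := fun x y => by
  rw [← hR, h, h]

lemma add_zsmul [AddGroup α] {c : α} (h : IsCurveSymmetry γ (· + c)) (n : ℤ) :
    IsCurveSymmetry γ (· + n • c) := fun x y => by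
  have hperiodic : Function.Periodic (fun p : α × α => edist (γ p.1) (γ p.2)) (c, c) :=
    fun p => h p.1 p.2
  exact hperiodic.zsmul n (x, y)

section LinearOrder

variable [LinearOrder α]

lemma eVariationOn_image (h : IsCurveSymmetry γ φ) (hφ : Monotone φ) (S : Set α) :
    eVariationOn γ (φ '' S) = eVariationOn γ S := by
  rw [← eVariationOn.comp_eq_of_monotoneOn γ φ (hφ.monotoneOn S)]
  exact eVariationOn_eq_of_edist_eq h S

lemma variationOnFromTo_of_monotone (h : IsCurveSymmetry γ φ) (hφ : Monotone φ)
    (hsurj : Function.Surjective φ) (a b : α) :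
    variationOnFromTo γ univ (φ a) (φ b) = variationOnFromTo γ univ a b :=
  calc variationOnFromTo γ univ (φ a) (φ b)
      = variationOnFromTo (γ ∘ φ) univ a b := by
        rw [variationOnFromTo.comp_eq_of_monotoneOn γ φ (hφ.monotoneOn univ) (mem_univ a)
          (mem_univ b), image_univ, hsurj.range_eq]
    _ = variationOnFromTo γ univ a b := variationOnFromTo_eq_of_edist_eq h univ a b

lemma variationOnFromTo_of_antitone (h : IsCurveSymmetry γ φ) (hφ : Antitone φ)
    (hsurj : Function.Surjective φ) (a b : α) :
    variationOnFromTo γ univ (φ a) (φ b) = -variationOnFromTo γ univ a b :=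
  calc variationOnFromTo γ univ (φ a) (φ b)
      = -variationOnFromTo (γ ∘ φ) univ a b := by
        rw [variationOnFromTo_comp_eq_neg_of_antitoneOn γ (hφ.antitoneOn univ) (mem_univ a)
          (mem_univ b), image_univ, hsurj.range_eq, neg_neg]
    _ = -variationOnFromTo γ univ a b :=
        congrArg Neg.neg (variationOnFromTo_eq_of_edist_eq h univ a b)

variable (hbv : LocallyBoundedVariationOn γ univ)
include hbv

lemma variationOnFromTo_map_of_monotone (h : IsCurveSymmetry γ φ) (hφ : Monotone φ)
    (hsurj : Function.Surjective φ) (a t : α) :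
    variationOnFromTo γ univ a (φ t) =
      variationOnFromTo γ univ a (φ a) + variationOnFromTo γ univ a t := by
  rw [← h.variationOnFromTo_of_monotone hφ hsurj a t,
    variationOnFromTo.add hbv (mem_univ a) (mem_univ (φ a)) (mem_univ (φ t))]

lemma variationOnFromTo_map_of_antitone (h : IsCurveSymmetry γ φ) (hφ : Antitone φ)
    (hsurj : Function.Surjective φ) (a t : α) :
    variationOnFromTo γ univ a (φ t) =
      variationOnFromTo γ univ a (φ a) - variationOnFromTo γ univ a t := by
  rw [sub_eq_add_neg, ← h.variationOnFromTo_of_antitone hφ hsurj a t,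
    variationOnFromTo.add hbv (mem_univ a) (mem_univ (φ a)) (mem_univ (φ t))]

end LinearOrder

section Translation

variable [AddCommGroup α] [LinearOrder α] [IsOrderedAddMonoid α] {c : α}

lemma eVariationOn_Icc_add_nsmul (h : IsCurveSymmetry γ (· + c)) (n : ℕ) (a b : α) :
    eVariationOn γ (Icc (a + n • c) (b + n • c)) = eVariationOn γ (Icc a b) := by
  rw [← image_add_const_Icc, ← natCast_zsmul]
  exact (h.add_zsmul n).eVariationOn_image (fun _ _ hxy => add_le_add_left hxy _) _

lemma boundedVariationOn_Icc_zero_nsmul (h : IsCurveSymmetry γ (· + c)) (hc : 0 ≤ c)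
    (hfin : BoundedVariationOn γ (Icc 0 c)) (n : ℕ) : BoundedVariationOn γ (Icc 0 (n • c)) := by
  have hsum := eVariationOn.sum' γ (I := (· • c)) (nsmul_left_monotone hc) (n := n)
  rw [zero_nsmul] at hsum
  rw [BoundedVariationOn, ← hsum]
  refine ENNReal.sum_ne_top.2 fun i _ => ?_
  have hpiece := h.eVariationOn_Icc_add_nsmul i 0 c
  rw [zero_add, ← succ_nsmul'] at hpiece
  rwa [hpiece]

lemma locallyBoundedVariationOn [Archimedean α] (h : IsCurveSymmetry γ (· + c)) (hc : 0 < c)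
    (hfin : BoundedVariationOn γ (Icc 0 c)) : LocallyBoundedVariationOn γ univ := by
  intro a b _ _
  obtain ⟨k, hk⟩ := Archimedean.arch (-a) hc
  obtain ⟨n, hn⟩ := Archimedean.arch (b + k • c) hc
  rw [univ_inter, BoundedVariationOn, ← h.eVariationOn_Icc_add_nsmul k]
  exact (h.boundedVariationOn_Icc_zero_nsmul hc.le hfin n).mono
    (Icc_subset_Icc (neg_le_iff_add_nonneg'.1 hk) hn)

end Translation

end IsCurveSymmetry

section Dihedral

variable {E : Type*} {ℓ L : ℝ}

lemma IsCurveSymmetry.add_period [PseudoEMetricSpace E] {γ : ℝ → E}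
    (h : IsCurveSymmetry γ (psi ℓ 1)) : IsCurveSymmetry γ (· + ℓ) := by
  have htranslate : IsCurveSymmetry γ (· + -(ℓ / 2)) := h
  have htwice := htranslate.add_zsmul (-2)
  rwa [show (-2 : ℤ) • -(ℓ / 2) = ℓ by norm_num; ring] at htwice

lemma arclength_psi [PseudoEMetricSpace E] {γ : ℝ → E} (hbv : LocallyBoundedVariationOn γ univ)
    (hsym : ∀ i, IsCurveSymmetry γ (psi ℓ i)) (hL : variationOnFromTo γ univ 0 ℓ = L)
    (i : Fin 3) (t : ℝ) :
    variationOnFromTo γ univ 0 (psi ℓ i t) = psi L i (variationOnFromTo γ univ 0 t) := by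
  set s := variationOnFromTo γ univ 0
  have hreflect (c : ℝ) (h : IsCurveSymmetry γ (c - ·)) (t : ℝ) : s (c - t) = s c - s t := by
    simpa using h.variationOnFromTo_map_of_antitone hbv (fun _ _ hxy => sub_le_sub_left hxy c)
      (Equiv.subLeft c).surjective 0 t
  have htranslate (t : ℝ) : s (t - ℓ / 2) = s (-(ℓ / 2)) + s t := by
    simpa [psi] using (hsym 1).variationOnFromTo_map_of_monotone hbv
      (fun _ _ hxy => sub_le_sub_right hxy (ℓ / 2)) (Equiv.subRight (ℓ / 2)).surjective 0 t
  have hhalves : s (ℓ / 2) = L / 2 ∧ s (-(ℓ / 2)) = -(L / 2) := by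
    have hzero : s 0 = 0 := variationOnFromTo.self γ univ 0
    have hfirst : s 0 = s (-(ℓ / 2)) + s (ℓ / 2) := by simpa using htranslate (ℓ / 2)
    have hsecond : s (ℓ / 2) = s (-(ℓ / 2)) + s ℓ := by simpa only [sub_half] using htranslate ℓ
    constructor <;> linarith
  match i with
  | 0 => exact (hreflect (ℓ / 2) (hsym 0) t).trans (by rw [hhalves.1]; rfl)
  | 1 => exact (htranslate t).trans (by rw [hhalves.2, neg_add_eq_sub]; rfl)
  | 2 => exact (hreflect ℓ (hsym 2) t).trans (by rw [hL]; rfl)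

lemma arclength_surjective [PseudoMetricSpace E] {γ : ℝ → E} (hγ : Continuous γ)
    (hbv : LocallyBoundedVariationOn γ univ) (hsym : IsCurveSymmetry γ (· + ℓ))
    (hpos : 0 < variationOnFromTo γ univ 0 ℓ) :
    Function.Surjective (variationOnFromTo γ univ 0) := by
  refine surjective_of_continuous_of_map_add_const (a := ℓ)
    (continuous_variationOnFromTo hγ hbv 0) hpos fun t => ?_
  have h := hsym.variationOnFromTo_map_of_monotone hbv (fun _ _ hxy => add_le_add_left hxy ℓ)
    (Equiv.addRight ℓ).surjective 0 t
  rwa [zero_add, add_comm (variationOnFromTo γ univ 0 ℓ)] at h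

theorem arclength_parametrization_dihedralSymmetric_general [PseudoMetricSpace E]
    {R : Fin 3 → E → E} (hR : ∀ i, Isometry (R i)) (hℓ : 0 < ℓ) {γ : ℝ → E} (hγ : Continuous γ)
    (hsym : ∀ i t, R i (γ (psi ℓ i t)) = γ t) (hLpos : 0 < L)
    (hL : eVariationOn γ (Icc 0 ℓ) = ENNReal.ofReal L)
    {s : ℝ → ℝ} (hs : ∀ t, s t = variationOnFromTo γ univ 0 t)
    {Γ : ℝ → E} (hΓ : ∀ t, Γ (s t) = γ t) (i : Fin 3) (u : ℝ) :
    R i (Γ (psi L i u)) = Γ u := by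
  obtain rfl : s = variationOnFromTo γ univ 0 := funext hs
  have hcurve (i : Fin 3) : IsCurveSymmetry γ (psi ℓ i) := .of_isometry (hR i) (hsym i)
  have hperiod : IsCurveSymmetry γ (· + ℓ) := (hcurve 1).add_period
  have hbv : LocallyBoundedVariationOn γ univ :=
    hperiod.locallyBoundedVariationOn hℓ (hL.trans_ne ENNReal.ofReal_ne_top)
  have hlength : variationOnFromTo γ univ 0 ℓ = L := by
    rw [variationOnFromTo.eq_of_le _ _ hℓ.le, univ_inter, hL, ENNReal.toReal_ofReal hLpos.le]
  obtain ⟨t, rfl⟩ := arclength_surjective hγ hbv hperiod (hlength.symm ▸ hLpos) u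
  rw [← arclength_psi hbv hcurve hlength, hΓ, hΓ, hsym]

end Dihedral

lemma isometry_Rot (i : Fin 3) : Isometry (Rot i) := by
  refine Isometry.of_dist_eq fun x y => ?_
  rw [EuclideanSpace.dist_eq, EuclideanSpace.dist_eq]
  congr 1
  fin_cases i <;> simp [Rot, vec3, Fin.sum_univ_three, Real.dist_eq, sq_abs] <;> ring

/-- **Symmetry of the arclength parametrization.** Let `γ` be a continuous
`ℓ`-periodic D₂-symmetric curve of finite positive length `L` over one period, and let
`s` be its signed arclength function based at `0` (so `s(t) = ℒ(γ|[0,t])` for `t ≥ 0` and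
`s(t) = -ℒ(γ|[t,0])` for `t < 0`). If `Γ` is continuous, `L`-periodic and satisfies
`Γ(s(t)) = γ(t)` for all `t`, then `Γ` is D₂-symmetric with period `L`. -/
theorem arclength_parametrization_dihedralSymmetric (ℓ : ℝ) (hℓ : 0 < ℓ)
    (γ : ℝ → E3) (hc : Continuous γ) (hper : ∀ t, γ (t + ℓ) = γ t)
    (hsym : DihedralSymmetric ℓ γ)
    (L : ℝ) (hLpos : 0 < L)
    (hL : eVariationOn γ (Icc 0 ℓ) = ENNReal.ofReal L)
    (s : ℝ → ℝ) (hs : ∀ t, s t = variationOnFromTo γ univ 0 t)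
    (Γ : ℝ → E3) (hΓc : Continuous Γ) (hΓper : ∀ u, Γ (u + L) = Γ u)
    (hΓs : ∀ t, Γ (s t) = γ t) :
    DihedralSymmetric L Γ :=
  arclength_parametrization_dihedralSymmetric_general isometry_Rot hℓ hc hsym hLpos hL hs hΓs
end
end

section
/- Optimal L∞-bound: let ℓ > 0 and let γ : ℝ → ℝ³ be a continuous ℓ-periodic curve whose length Λ over one period is finite and positive, and whose image K := γ(ℝ) has dihedral symmetry, i.e. Rᵢ(K) = K for i = 1, 2, 3. Then ‖γ(t)‖ ≤ Λ/4 for every t ∈ ℝ, i.e. the curve is contained in the closed ball of radius Λ/4 centered at the origin. -/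
/-!
Let `n` points `xᵢ` with `∑ xᵢ = 0` lie on a closed curve of length `Λ` in a normed space, numbered
in the order in which the curve visits them. Since `n xᵢ = ∑ⱼ (xᵢ - xⱼ)`, the sum `n ∑ ‖xᵢ‖` is at
most the sum of all `dist xᵢ xⱼ`. For each offset `k`, going around the inscribed polygon forwards
or backwards gives `∑ᵢ dist xᵢ xᵢ₊ₖ ≤ min k (n - k) Λ`, and these numbers add up to at most
`n² Λ / 4`. Hence the mean of the `‖xᵢ‖` is at most `Λ / 4`. The orbit of a point under the
dihedral group consists of four points of equal norm with sum zero.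
-/


noncomputable section

open Real Set

section CyclicSums

variable {X G : Type*} [PseudoEMetricSpace X] [AddGroup G] [Fintype G]

lemma sum_edist_add_nsmul_le (x : G → X) (g : G) (k : ℕ) :
    ∑ i, edist (x i) (x (i + k • g)) ≤ k * ∑ i, edist (x i) (x (i + g)) := by
  induction k with
  | zero => simp
  | succ k ih =>
    have shift : ∑ i, edist (x (i + k • g)) (x (i + k • g + g)) = ∑ i, edist (x i) (x (i + g)) :=
      Equiv.sum_comp (Equiv.addRight (k • g)) fun i => edist (x i) (x (i + g))
    calc ∑ i, edist (x i) (x (i + (k + 1) • g))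
        ≤ ∑ i, (edist (x i) (x (i + k • g)) + edist (x (i + k • g)) (x (i + k • g + g))) := by
          simp only [succ_nsmul, ← add_assoc]
          exact Finset.sum_le_sum fun i _ => edist_triangle _ _ _
      _ ≤ k * ∑ i, edist (x i) (x (i + g)) + ∑ i, edist (x i) (x (i + g)) := by
          rw [Finset.sum_add_distrib, shift]
          gcongr
      _ = (k + 1 : ℕ) * ∑ i, edist (x i) (x (i + g)) := by push_cast; ring

lemma sum_edist_add_neg (x : G → X) (g : G) :
    ∑ i, edist (x i) (x (i + -g)) = ∑ i, edist (x i) (x (i + g)) := by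
  rw [← Equiv.sum_comp (Equiv.addRight g)]
  simp [edist_comm]

lemma sum_sum_eq_sum_sum_add {M : Type*} [AddCommMonoid M] (F : G → G → M) :
    ∑ i, ∑ j, F i j = ∑ k, ∑ i, F i (i + k) := by
  rw [Finset.sum_comm (f := fun k i => F i (i + k))]
  exact Finset.sum_congr rfl fun i _ => (Equiv.sum_comp (Equiv.addLeft i) (F i)).symm

end CyclicSums

lemma four_mul_sum_range_min_le_sq (n : ℕ) : 4 * ∑ k ∈ Finset.range n, min k (n - k) ≤ n ^ 2 := by
  induction n using Nat.twoStepInduction with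
  | zero => simp
  | one => simp
  | more n ih _ =>
    have step : ∑ k ∈ Finset.range (n + 2), min k (n + 2 - k)
        = ∑ k ∈ Finset.range n, min k (n - k) + (n + 1) := by
      have peel : ∀ k ∈ Finset.range (n + 1), min (k + 1) (n + 2 - (k + 1)) = min k (n - k) + 1 :=
        fun k hk => by grind
      rw [Finset.sum_range_succ', Finset.sum_congr rfl peel, Finset.sum_add_distrib,
        Finset.sum_range_succ]
      simp
    rw [step]
    linarith

section ClosedPolygon

variable {X : Type*} [PseudoEMetricSpace X] {n : ℕ} [NeZero n]

/-- The length of the closed polygon with vertices `x 0, …, x (n - 1)`, in this order. Addition on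
`Fin n` is cyclic, so the side from `x (n - 1)` back to `x 0` is included. -/
def perimeter (x : Fin n → X) : ENNReal := ∑ i, edist (x i) (x (i + 1))

lemma sum_edist_add_le_min_mul_perimeter (x : Fin n → X) (k : Fin n) :
    ∑ i, edist (x i) (x (i + k)) ≤ (min k.val (n - k.val) : ℕ) * perimeter x := by
  have val_nsmul_one : k.val • (1 : Fin n) = k := by open Fin.CommRing in simp
  have sub_val_nsmul_one : (n - k.val) • (1 : Fin n) = -k := by
    refine eq_neg_of_add_eq_zero_left ?_
    nth_rw 2 [← val_nsmul_one]
    rw [← add_nsmul, Nat.sub_add_cancel k.isLt.le]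
    open Fin.CommRing in simp
  have forward := sum_edist_add_nsmul_le x 1 k.val
  have backward := sum_edist_add_nsmul_le x 1 (n - k.val)
  rw [val_nsmul_one] at forward
  rw [sub_val_nsmul_one, sum_edist_add_neg] at backward
  rcases min_choice k.val (n - k.val) with h | h <;> rwa [h]

lemma four_mul_sum_edist_le_sq_mul_perimeter (x : Fin n → X) :
    4 * ∑ i, ∑ j, edist (x i) (x j) ≤ n ^ 2 * perimeter x := by
  calc 4 * ∑ i, ∑ j, edist (x i) (x j)
      = 4 * ∑ k, ∑ i, edist (x i) (x (i + k)) := by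
        rw [sum_sum_eq_sum_sum_add fun i j => edist (x i) (x j)]
    _ ≤ 4 * ∑ k : Fin n, (min k.val (n - k.val) : ℕ) * perimeter x := by
        gcongr with k
        exact sum_edist_add_le_min_mul_perimeter x k
    _ = (4 * ∑ k ∈ Finset.range n, min k (n - k) : ℕ) * perimeter x := by
        rw [← Finset.sum_mul, ← Fin.sum_univ_eq_sum_range fun k => min k (n - k), ← mul_assoc]
        push_cast
        rfl
    _ ≤ n ^ 2 * perimeter x := by
        gcongr
        exact_mod_cast four_mul_sum_range_min_le_sq n

end ClosedPolygon

section InscribedPolygon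

variable {α X ι : Type*} [LinearOrder α] [PseudoEMetricSpace X] {f : α → X} {a b : α}

lemma eVariationOn_Icc_add_Icc (f : α → X) {r s t : α} (hrs : r ≤ s) (hst : s ≤ t) :
    eVariationOn f (Icc r s) + eVariationOn f (Icc s t) = eVariationOn f (Icc r t) := by
  simpa only [univ_inter] using eVariationOn.Icc_add_Icc f hrs hst (mem_univ s)

lemma edist_le_eVariationOn_Icc (f : α → X) {s t : α} (hst : s ≤ t) :
    edist (f s) (f t) ≤ eVariationOn f (Icc s t) :=
  eVariationOn.edist_le f (left_mem_Icc.2 hst) (right_mem_Icc.2 hst)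

lemma sum_edist_castSucc_succ_le_eVariationOn (f : α → X) {n : ℕ} {τ : Fin (n + 1) → α}
    (hτ : Monotone τ) :
    ∑ i : Fin n, edist (f (τ i.castSucc)) (f (τ i.succ))
      ≤ eVariationOn f (Icc (τ 0) (τ (Fin.last n))) := by
  induction n with
  | zero => simp
  | succ n ih =>
    have last_le : τ (Fin.last n).castSucc ≤ τ (Fin.last (n + 1)) := hτ (Fin.le_last _)
    rw [Fin.sum_univ_castSucc, ← eVariationOn_Icc_add_Icc f (hτ (Fin.zero_le _)) last_le]
    exact add_le_add (ih (hτ.comp Fin.strictMono_castSucc.monotone))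
      (edist_le_eVariationOn_Icc f last_le)

lemma perimeter_le_eVariationOn (hf : f a = f b) {n : ℕ} [NeZero n] {τ : Fin n → α}
    (hτ : Monotone τ) (hmem : ∀ i, τ i ∈ Icc a b) :
    perimeter (f ∘ τ) ≤ eVariationOn f (Icc a b) := by
  obtain ⟨n, rfl⟩ := Nat.exists_eq_succ_of_ne_zero (NeZero.ne n)
  have first_le_last : τ 0 ≤ τ (Fin.last n) := hτ (Fin.zero_le _)
  obtain ⟨ha, -⟩ := hmem 0
  obtain ⟨-, hb⟩ := hmem (Fin.last n)
  -- The closing side is cut off by the part of the curve that passes through `f b = f a`.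
  have closing : edist (f (τ (Fin.last n))) (f (τ 0))
      ≤ eVariationOn f (Icc (τ (Fin.last n)) b) + eVariationOn f (Icc a (τ 0)) := by
    refine (edist_triangle_right _ _ (f b)).trans (add_le_add ?_ ?_)
    · exact edist_le_eVariationOn_Icc f hb
    · rw [edist_comm, ← hf]
      exact edist_le_eVariationOn_Icc f ha
  have split : eVariationOn f (Icc a (τ 0)) + eVariationOn f (Icc (τ 0) (τ (Fin.last n)))
      + eVariationOn f (Icc (τ (Fin.last n)) b) = eVariationOn f (Icc a b) := by
    rw [eVariationOn_Icc_add_Icc f ha first_le_last,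
      eVariationOn_Icc_add_Icc f (ha.trans first_le_last) hb]
  calc perimeter (f ∘ τ)
      = ∑ i : Fin n, edist (f (τ i.castSucc)) (f (τ i.succ))
          + edist (f (τ (Fin.last n))) (f (τ 0)) := by
        simp [perimeter, Fin.sum_univ_castSucc, Fin.coeSucc_eq_succ]
    _ ≤ eVariationOn f (Icc (τ 0) (τ (Fin.last n)))
          + (eVariationOn f (Icc (τ (Fin.last n)) b) + eVariationOn f (Icc a (τ 0))) :=
        add_le_add (sum_edist_castSucc_succ_le_eVariationOn f hτ) closing
    _ = eVariationOn f (Icc a b) := by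
        rw [← split]
        ring

lemma exists_equiv_monotone_comp [Fintype ι] (τ : ι → α) :
    ∃ e : Fin (Fintype.card ι) ≃ ι, Monotone (τ ∘ e) :=
  ⟨(Tuple.sort (τ ∘ (Fintype.equivFin ι).symm)).trans (Fintype.equivFin ι).symm,
    Tuple.monotone_sort (τ ∘ (Fintype.equivFin ι).symm)⟩

lemma four_mul_sum_edist_le_sq_mul_eVariationOn [Fintype ι] (hf : f a = f b) {x : ι → X}
    (hx : ∀ i, x i ∈ f '' Icc a b) :
    4 * ∑ i, ∑ j, edist (x i) (x j) ≤ Fintype.card ι ^ 2 * eVariationOn f (Icc a b) := by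
  cases isEmpty_or_nonempty ι
  · simp
  choose τ hτ hfτ using hx
  obtain ⟨e, he⟩ := exists_equiv_monotone_comp τ
  calc 4 * ∑ i, ∑ j, edist (x i) (x j)
      = 4 * ∑ i, ∑ j, edist (f (τ (e i))) (f (τ (e j))) := by
        have reindex (i : ι) : ∑ j, edist (x i) (x (e j)) = ∑ j, edist (x i) (x j) :=
          e.sum_comp fun j => edist (x i) (x j)
        simp only [hfτ, reindex, e.sum_comp fun i => ∑ j, edist (x i) (x j)]
    _ ≤ Fintype.card ι ^ 2 * perimeter (f ∘ τ ∘ e) :=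
        four_mul_sum_edist_le_sq_mul_perimeter (f ∘ τ ∘ e)
    _ ≤ Fintype.card ι ^ 2 * eVariationOn f (Icc a b) := by
        gcongr
        exact perimeter_le_eVariationOn hf he fun i => hτ (e i)

end InscribedPolygon

section NormedSpace

variable {ι E : Type*} [Fintype ι] [SeminormedAddCommGroup E] [NormedSpace ℝ E]

lemma card_mul_sum_enorm_le_sum_edist {x : ι → E} (hsum : ∑ i, x i = 0) :
    Fintype.card ι * ∑ i, ‖x i‖ₑ ≤ ∑ i, ∑ j, edist (x i) (x j) := by
  rw [Finset.mul_sum]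
  refine Finset.sum_le_sum fun i _ => ?_
  calc Fintype.card ι * ‖x i‖ₑ
      = ‖∑ j, (x i - x j)‖ₑ := by
        simp [Finset.sum_sub_distrib, hsum, ← Nat.cast_smul_eq_nsmul ℝ, enorm_smul]
    _ ≤ ∑ j, edist (x i) (x j) := by
        simp only [edist_nndist, nndist_eq_nnnorm, enorm]
        exact_mod_cast nnnorm_sum_le Finset.univ fun j => x i - x j

theorem four_mul_sum_enorm_le_card_mul_eVariationOn {α : Type*} [LinearOrder α] {f : α → E}
    {a b : α} (hf : f a = f b) {x : ι → E} (hx : ∀ i, x i ∈ f '' Icc a b) (hsum : ∑ i, x i = 0) :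
    4 * ∑ i, ‖x i‖ₑ ≤ Fintype.card ι * eVariationOn f (Icc a b) := by
  cases isEmpty_or_nonempty ι
  · simp
  have card_ne_zero : (Fintype.card ι : ENNReal) ≠ 0 := by simp
  refine (ENNReal.mul_le_mul_iff_right card_ne_zero (ENNReal.natCast_ne_top _)).1 ?_
  calc Fintype.card ι * (4 * ∑ i, ‖x i‖ₑ)
      = 4 * (Fintype.card ι * ∑ i, ‖x i‖ₑ) := by ring
    _ ≤ 4 * ∑ i, ∑ j, edist (x i) (x j) := by
        gcongr
        exact card_mul_sum_enorm_le_sum_edist hsum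
    _ ≤ Fintype.card ι ^ 2 * eVariationOn f (Icc a b) :=
        four_mul_sum_edist_le_sq_mul_eVariationOn hf hx
    _ = Fintype.card ι * (Fintype.card ι * eVariationOn f (Icc a b)) := by ring

theorem dihedral_image_Linfty_bound_general [Nonempty ι] {T : ι → E → E}
    (hnorm : ∀ i x, ‖T i x‖ = ‖x‖) (hsum : ∀ x, ∑ i, T i x = 0) {ℓ : ℝ} (hℓ : 0 < ℓ) {γ : ℝ → E}
    (hper : Function.Periodic γ ℓ) (hT : ∀ i, MapsTo (T i) (range γ) (range γ)) (t : ℝ) :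
    ‖γ t‖ₑ ≤ eVariationOn γ (Icc 0 ℓ) / 4 := by
  have range_eq : γ '' Icc 0 ℓ = range γ := by simpa using hper.image_Icc hℓ 0
  have hmem : ∀ i, T i (γ t) ∈ γ '' Icc 0 ℓ := fun i => by
    rw [range_eq]
    exact hT i (mem_range_self t)
  have mean_bound := four_mul_sum_enorm_le_card_mul_eVariationOn
    (by simpa using (hper 0).symm) hmem (hsum (γ t))
  have enorm_T : ∀ i, ‖T i (γ t)‖ₑ = ‖γ t‖ₑ := fun i => enorm_eq_iff_norm_eq.2 (hnorm i _)
  simp only [enorm_T, Finset.sum_const, Finset.card_univ, nsmul_eq_mul] at mean_bound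
  have card_ne_zero : (Fintype.card ι : ENNReal) ≠ 0 := by simp
  rw [ENNReal.le_div_iff_mul_le (by simp) (by simp),
    ← ENNReal.mul_le_mul_iff_right card_ne_zero (ENNReal.natCast_ne_top _)]
  calc Fintype.card ι * (‖γ t‖ₑ * 4)
      = 4 * (Fintype.card ι * ‖γ t‖ₑ) := by ring
    _ ≤ Fintype.card ι * eVariationOn γ (Icc 0 ℓ) := mean_bound

end NormedSpace

/-- The dihedral group `D₂ = {1, R₁, R₂, R₃}`, listed in this order. -/
def dihedralMap : Fin 4 → E3 → E3 := Matrix.vecCons id Rot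

lemma norm_dihedralMap (i : Fin 4) (p : E3) : ‖dihedralMap i p‖ = ‖p‖ := by
  fin_cases i <;> simp [dihedralMap, Rot, vec3, EuclideanSpace.norm_eq, Fin.sum_univ_three]

lemma sum_dihedralMap (p : E3) : ∑ i, dihedralMap i p = 0 := by
  ext j
  fin_cases j <;> simp [dihedralMap, Rot, vec3, Fin.sum_univ_four]

lemma mapsTo_dihedralMap {K : Set E3} (hK : ∀ i, MapsTo (Rot i) K K) (i : Fin 4) :
    MapsTo (dihedralMap i) K K :=
  Fin.cases (mapsTo_id K) hK i

/-- **Optimal L∞-bound.** A continuous `ℓ`-periodic curve of finite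
positive length `Λ` over one period whose image is invariant under all three rotations
`R₁, R₂, R₃` is contained in the closed ball of radius `Λ/4` centered at the origin. -/
theorem dihedral_image_Linfty_bound (ℓ : ℝ) (hℓ : 0 < ℓ) (γ : ℝ → E3)
    (hc : Continuous γ) (hper : ∀ t, γ (t + ℓ) = γ t)
    (Λ : ℝ) (hΛpos : 0 < Λ)
    (hΛ : eVariationOn γ (Icc 0 ℓ) = ENNReal.ofReal Λ)
    (hK : ∀ i : Fin 3, Rot i '' Set.range γ = Set.range γ) :
    ∀ t : ℝ, ‖γ t‖ ≤ Λ / 4 := by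
  intro t
  have bound := dihedral_image_Linfty_bound_general norm_dihedralMap sum_dihedralMap hℓ hper
    (mapsTo_dihedralMap fun i => mapsTo_iff_image_subset.2 (hK i).subset) t
  simpa [hΛ, hΛpos.le] using ENNReal.toReal_mono (by simp [hΛ, ENNReal.div_eq_top]) bound
end
end

section
/- The explicit tangential pair of coplanar circles tpc[π] : ℝ → ℝ³, defined as the 1-periodic extension of tpc(t) = (1/(4π))·(1 − cos(4πt), sin(4πt), 0) for t ∈ [0, 1/2) and tpc(t) = (1/(4π))·(−(1 − cos(4πt)), sin(4πt), 0) for t ∈ [1/2, 1), is continuously differentiable with Lipschitz continuous derivative, is parametrized by arclength (‖tpc'(t)‖ = 1 for all t), is D₂-symmetric, its second derivative exists at all t ∉ (1/2)ℤ with ‖tpc''(t)‖ = 4π there, and its image is the union of the two circles of radius 1/(4π) in the plane {x₃ = 0} centered at ±(1/(4π))e₁, which meet exactly at the origin. -/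
/-! In polar coordinates around the point of tangency, with the angle `u` measured from the common
tangent line, the two circles of radius `r` have the equation `ρ = ±2r sin u`. Hence
`u ↦ 2r sin u (|sin u|, cos u, 0)` runs through both of them, and it is `tpcPi` for `r = 1/(4π)` and
`u = 2πt`. The only singular ingredient is `x|x|`, which is continuously differentiable with
derivative `2|x|`. The second derivative therefore exists where `sin u ≠ 0`, and as its norm is
constant off this countable set, it bounds the Lipschitz constant of the velocity. -/

noncomputable section

open Real Set

/-- The tangential pair of co-planar circles `tpc[π]`, defined as the `1`-periodic
extension of `t ↦ (1/(4π))·(1 - cos(4πt), sin(4πt), 0)` on `[0, 1/2)` and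
`t ↦ (1/(4π))·(-(1 - cos(4πt)), sin(4πt), 0)` on `[1/2, 1)`. -/
def tpcPi (t : ℝ) : E3 :=
  let s := Int.fract t
  if s < 1 / 2 then
    (1 / (4 * π)) • vec3 (1 - Real.cos (4 * π * s)) (Real.sin (4 * π * s)) 0
  else
    (1 / (4 * π)) • vec3 (-(1 - Real.cos (4 * π * s))) (Real.sin (4 * π * s)) 0

lemma hasDerivAt_mul_abs (x : ℝ) : HasDerivAt (fun y : ℝ => y * |y|) (2 * |x|) x := by
  have off_zero : ∀ y : ℝ, y ≠ 0 → HasDerivAt (fun y : ℝ => y * |y|) (2 * |y|) y := fun y hy => by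
    refine ((hasDerivAt_id y).mul (hasDerivAt_abs hy)).congr_deriv ?_
    rw [id, one_mul, self_mul_sign, two_mul]
  exact hasDerivAt_of_hasDerivAt_of_ne' off_zero (by fun_prop) (by fun_prop) x

lemma lipschitzWith_of_norm_deriv_le_off_countable {E : Type*} [NormedAddCommGroup E]
    [NormedSpace ℝ E] [CompleteSpace E] {f : ℝ → E} {C : NNReal} {s : Set ℝ} (hs : s.Countable)
    (hf : Continuous f) (hd : ∀ x ∉ s, DifferentiableAt ℝ f x) (hC : ∀ x ∉ s, ‖deriv f x‖ ≤ C) :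
    LipschitzWith C f := by
  have hC_ae : ∀ᵐ x, ‖deriv f x‖ ≤ C := (hs.ae_notMem MeasureTheory.volume).mono hC
  refine LipschitzWith.of_dist_le_mul fun a b => ?_
  have integrable : IntervalIntegrable (deriv f) MeasureTheory.volume b a :=
    intervalIntegrable_const.mono_fun' (aestronglyMeasurable_deriv f _)
      (MeasureTheory.ae_restrict_of_ae hC_ae)
  have ftc : ∫ x in b..a, deriv f x = f a - f b :=
    MeasureTheory.integral_eq_of_hasDerivAt_off_countable f (deriv f) hs hf.continuousOn
      (fun x hx => (hd x hx.2).hasDerivAt) integrable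
  rw [dist_eq_norm, Real.dist_eq, ← ftc]
  exact intervalIntegral.norm_integral_le_of_norm_le_const_ae (hC_ae.mono fun _ h _ => h)

lemma eq_zero_of_norm_sub_eq_of_norm_add_eq {E : Type*} [NormedAddCommGroup E]
    [NormedSpace ℝ E] [StrictConvexSpace ℝ E] {x c : E} (hsub : ‖x - c‖ = ‖c‖)
    (hadd : ‖x + c‖ = ‖c‖) : x = 0 := by
  rw [norm_sub_rev] at hsub
  rw [add_comm] at hadd
  by_contra hx
  have hne : c + x ≠ c - x := fun h => hx <| calc
    x = (1 / 2 : ℝ) • ((c + x) - (c - x)) := by module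
    _ = 0 := by rw [h, sub_self, smul_zero]
  have hmid : (1 / 2 : ℝ) • ((c + x) + (c - x)) = c := by module
  have hlt := (norm_midpoint_lt_iff (hadd.trans hsub.symm)).2 hne
  rw [hmid, hadd] at hlt
  exact hlt.false

@[simp] lemma vec3_apply_zero (a b c : ℝ) : vec3 a b c 0 = a := rfl

@[simp] lemma vec3_apply_one (a b c : ℝ) : vec3 a b c 1 = b := rfl

@[simp] lemma vec3_apply_two (a b c : ℝ) : vec3 a b c 2 = c := rfl

lemma E3_ext {x y : E3} (h0 : x 0 = y 0) (h1 : x 1 = y 1) (h2 : x 2 = y 2) : x = y := by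
  ext i
  fin_cases i
  exacts [h0, h1, h2]

lemma vec3_eq_smul_add_smul_add_smul (a b c : ℝ) : vec3 a b c = a • e1 + b • e2 + c • e3 := by
  apply E3_ext <;> simp [e1, e2, e3]

lemma smul_vec3 (k a b c : ℝ) : k • vec3 a b c = vec3 (k * a) (k * b) (k * c) := by
  apply E3_ext <;> rfl

lemma E3_norm_sq (x : E3) : ‖x‖ ^ 2 = x 0 ^ 2 + x 1 ^ 2 + x 2 ^ 2 := by
  rw [EuclideanSpace.real_norm_sq_eq, Fin.sum_univ_three]

lemma norm_e1 : ‖e1‖ = 1 := by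
  rw [← sq_eq_sq₀ (norm_nonneg _) zero_le_one, E3_norm_sq]
  simp [e1]

lemma continuous_vec3 {X : Type*} [TopologicalSpace X] {f g h : X → ℝ} (hf : Continuous f)
    (hg : Continuous g) (hh : Continuous h) : Continuous fun x => vec3 (f x) (g x) (h x) := by
  simp only [vec3_eq_smul_add_smul_add_smul]
  fun_prop

lemma hasDerivAt_vec3 {f g h : ℝ → ℝ} {f' g' h' t : ℝ} (hf : HasDerivAt f f' t)
    (hg : HasDerivAt g g' t) (hh : HasDerivAt h h' t) :
    HasDerivAt (fun t => vec3 (f t) (g t) (h t)) (vec3 f' g' h') t := by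
  simp only [vec3_eq_smul_add_smul_add_smul]
  exact ((hf.smul_const e1).add (hg.smul_const e2)).add (hh.smul_const e3)

lemma norm_sub_smul_e1_eq_abs_iff (x : E3) (r : ℝ) :
    ‖x - r • e1‖ = |r| ↔ x 0 ^ 2 + x 1 ^ 2 + x 2 ^ 2 = 2 * r * x 0 := by
  rw [← sq_eq_sq₀ (norm_nonneg _) (abs_nonneg r), E3_norm_sq, sq_abs]
  simp only [e1, PiLp.sub_apply, PiLp.smul_apply, vec3_apply_zero, vec3_apply_one, vec3_apply_two,
    smul_eq_mul]
  constructor <;> intro h <;> linear_combination h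

lemma DihedralSymmetric.comp_mul_left {c ℓ : ℝ} {γ : ℝ → E3} (h : DihedralSymmetric (c * ℓ) γ) :
    DihedralSymmetric ℓ fun t => γ (c * t) := by
  intro i t
  have hpsi : c * psi ℓ i t = psi (c * ℓ) i (c * t) := by
    fin_cases i <;> simp [psi, mul_sub, mul_div_assoc]
  simpa only [hpsi] using h i (c * t)

/-- The pair of circles of radius `r` in the plane `{x₃ = 0}` that touch at the origin along the
line `ℝe₂`, parametrized by the angle `u` between that line and the chord from the origin. The
circle on the side of `r • e₁` is traversed while `0 ≤ sin u`, the other one while `sin u ≤ 0`. -/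
def tangentCircles (r u : ℝ) : E3 := (2 * r * sin u) • vec3 |sin u| (cos u) 0

namespace tangentCircles

lemma eq_vec3 (r u : ℝ) :
    tangentCircles r u = vec3 (2 * r * (sin u * |sin u|)) (r * sin (2 * u)) 0 := by
  rw [tangentCircles, smul_vec3, sin_two_mul, mul_zero]
  congr 1 <;> ring

lemma eq_of_sin_nonneg (r : ℝ) {u : ℝ} (hu : 0 ≤ sin u) :
    tangentCircles r u = r • vec3 (1 - cos (2 * u)) (sin (2 * u)) 0 := by
  rw [eq_vec3, abs_of_nonneg hu, smul_vec3, cos_two_mul, cos_sq', mul_zero]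
  congr 1
  ring

lemma eq_of_sin_nonpos (r : ℝ) {u : ℝ} (hu : sin u ≤ 0) :
    tangentCircles r u = r • vec3 (-(1 - cos (2 * u))) (sin (2 * u)) 0 := by
  rw [eq_vec3, abs_of_nonpos hu, smul_vec3, cos_two_mul, cos_sq', mul_zero]
  congr 1
  ring

lemma periodic (r : ℝ) : Function.Periodic (tangentCircles r) (2 * π) := fun u => by
  simp only [tangentCircles, sin_add_two_pi, cos_add_two_pi]

lemma neg_angle (r u : ℝ) : tangentCircles r (-u) = -tangentCircles r u := by
  simp only [tangentCircles, sin_neg, cos_neg, abs_neg, mul_neg, neg_smul]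

lemma dihedralSymmetric (r : ℝ) : DihedralSymmetric (2 * π) (tangentCircles r) := by
  intro i u
  have half : 2 * π / 2 = π := by ring
  fin_cases i <;> apply E3_ext <;>
    simp [Rot, psi, tangentCircles, half, sin_sub_pi, cos_sub_pi, sin_two_pi_sub, cos_two_pi_sub]

lemma hasDerivAt (r u : ℝ) :
    HasDerivAt (tangentCircles r) (vec3 (4 * r * (|sin u| * cos u)) (2 * r * cos (2 * u)) 0) u := by
  rw [funext (eq_vec3 r)]
  refine hasDerivAt_vec3 ?_ ?_ (hasDerivAt_const u 0)
  · have hcomp := (hasDerivAt_mul_abs (sin u)).comp u (hasDerivAt_sin u)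
    refine (hcomp.const_mul (2 * r)).congr_deriv ?_
    ring
  · refine (((hasDerivAt_id' u).const_mul 2).sin.const_mul r).congr_deriv ?_
    ring

lemma deriv_eq (r : ℝ) : deriv (tangentCircles r) =
    fun u => vec3 (4 * r * (|sin u| * cos u)) (2 * r * cos (2 * u)) 0 :=
  funext fun u => (hasDerivAt r u).deriv

lemma contDiff (r : ℝ) : ContDiff ℝ 1 (tangentCircles r) := by
  refine contDiff_one_iff_deriv.2 ⟨fun u => (hasDerivAt r u).differentiableAt, ?_⟩
  rw [deriv_eq]
  exact continuous_vec3 (by fun_prop) (by fun_prop) continuous_const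

lemma norm_deriv (r u : ℝ) : ‖deriv (tangentCircles r) u‖ = 2 * |r| := by
  rw [← sq_eq_sq₀ (norm_nonneg _) (by positivity), E3_norm_sq, deriv_eq]
  simp only [vec3_apply_zero, vec3_apply_one, vec3_apply_two, mul_pow, sq_abs, cos_two_mul]
  linear_combination 16 * r ^ 2 * cos u ^ 2 * sin_sq_add_cos_sq u

lemma hasDerivAt_deriv (r : ℝ) {u : ℝ} (hu : sin u ≠ 0) :
    HasDerivAt (deriv (tangentCircles r))
      (vec3 (4 * r * (SignType.sign (sin u) * cos (2 * u))) (-(4 * r * sin (2 * u))) 0) u := by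
  rw [deriv_eq]
  refine hasDerivAt_vec3 ?_ ?_ (hasDerivAt_const u 0)
  · have habs := (hasDerivAt_abs hu).comp u (hasDerivAt_sin u)
    refine ((habs.mul (hasDerivAt_cos u)).const_mul (4 * r)).congr_deriv ?_
    rw [Function.comp_apply, ← sign_mul_self (sin u), cos_two_mul']
    ring
  · refine (((hasDerivAt_id' u).const_mul 2).cos.const_mul (2 * r)).congr_deriv ?_
    ring

lemma norm_deriv_deriv (r : ℝ) {u : ℝ} (hu : sin u ≠ 0) :
    ‖deriv (deriv (tangentCircles r)) u‖ = 4 * |r| := by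
  have sign_sq : (SignType.sign (sin u) : ℝ) ^ 2 = 1 := by
    rcases hu.lt_or_gt with h | h <;> simp [h]
  rw [← sq_eq_sq₀ (norm_nonneg _) (by positivity), E3_norm_sq, (hasDerivAt_deriv r hu).deriv]
  simp only [vec3_apply_zero, vec3_apply_one, vec3_apply_two, mul_pow, neg_sq, sq_abs, sign_sq]
  linear_combination 16 * r ^ 2 * sin_sq_add_cos_sq (2 * u)

lemma apply_two (r u : ℝ) : tangentCircles r u 2 = 0 := by
  rw [eq_vec3, vec3_apply_two]

lemma norm_sub_smul_e1 (r : ℝ) {u : ℝ} (hu : 0 ≤ sin u) :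
    ‖tangentCircles r u - r • e1‖ = |r| := by
  rw [norm_sub_smul_e1_eq_abs_iff, tangentCircles, abs_of_nonneg hu]
  simp only [PiLp.smul_apply, vec3_apply_zero, vec3_apply_one, vec3_apply_two, smul_eq_mul]
  linear_combination (2 * r * sin u) ^ 2 * sin_sq_add_cos_sq u

lemma exists_eq_of_norm_sub_smul_e1 {r : ℝ} (hr : 0 < r) {x : E3} (h2 : x 2 = 0)
    (hx : ‖x - r • e1‖ = r) : ∃ u, tangentCircles r u = x := by
  set z : ℂ := ⟨x 1, x 0⟩
  have hcos : ‖z‖ * cos z.arg = x 1 := Complex.norm_mul_cos_arg z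
  have hsin : ‖z‖ * sin z.arg = x 0 := Complex.norm_mul_sin_arg z
  have hcircle : x 0 ^ 2 + x 1 ^ 2 + x 2 ^ 2 = 2 * r * x 0 :=
    (norm_sub_smul_e1_eq_abs_iff x r).1 (hx.trans (abs_of_pos hr).symm)
  have hnorm : ‖z‖ = 2 * r * sin z.arg := by
    rcases eq_or_ne z 0 with hz | hz
    · simp [hz]
    · refine mul_left_cancel₀ (norm_ne_zero_iff.2 hz) ?_
      rw [h2, ← hsin, ← hcos] at hcircle
      linear_combination hcircle - ‖z‖ ^ 2 * sin_sq_add_cos_sq z.arg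
  have hsin_nonneg : 0 ≤ sin z.arg :=
    nonneg_of_mul_nonneg_right (hnorm ▸ norm_nonneg z) (by positivity : 0 < 2 * r)
  refine ⟨z.arg, ?_⟩
  rw [tangentCircles, ← hnorm, abs_of_nonneg hsin_nonneg]
  apply E3_ext <;> simp [hsin, hcos, h2]

theorem range_eq {r : ℝ} (hr : 0 < r) : range (tangentCircles r) =
    {x : E3 | x 2 = 0 ∧ ‖x - r • e1‖ = r} ∪ {x : E3 | x 2 = 0 ∧ ‖x + r • e1‖ = r} := by
  have norm_add (x : E3) : ‖x + r • e1‖ = ‖-x - r • e1‖ := by rw [← norm_neg, neg_add']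
  ext x
  simp only [mem_union, mem_ofPred_eq, norm_add]
  constructor
  · rintro ⟨u, rfl⟩
    rcases le_total 0 (sin u) with hu | hu
    · exact .inl ⟨apply_two r u, (norm_sub_smul_e1 r hu).trans (abs_of_pos hr)⟩
    · refine .inr ⟨apply_two r u, ?_⟩
      rw [← neg_angle, norm_sub_smul_e1 r (by simpa using hu), abs_of_pos hr]
  · rintro (⟨h2, hx⟩ | ⟨h2, hx⟩)
    · exact exists_eq_of_norm_sub_smul_e1 hr h2 hx
    · obtain ⟨u, hu⟩ := exists_eq_of_norm_sub_smul_e1 hr (x := -x) (by simp [h2]) hx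
      exact ⟨-u, by rw [neg_angle, hu, neg_neg]⟩

end tangentCircles

lemma coplanar_circles_inter {r : ℝ} (hr : 0 ≤ r) :
    {x : E3 | x 2 = 0 ∧ ‖x - r • e1‖ = r} ∩ {x : E3 | x 2 = 0 ∧ ‖x + r • e1‖ = r} = {0} := by
  have hnorm : ‖r • e1‖ = r := by rw [norm_smul, norm_e1, mul_one, norm_of_nonneg hr]
  ext x
  constructor
  · rintro ⟨⟨-, hsub⟩, -, hadd⟩
    exact eq_zero_of_norm_sub_eq_of_norm_add_eq (hsub.trans hnorm.symm) (hadd.trans hnorm.symm)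
  · rintro rfl
    simp [hnorm]

lemma tpcPi_eq_tangentCircles :
    tpcPi = fun t => tangentCircles (1 / (4 * π)) (2 * π * t) := by
  funext t
  have hfract : tangentCircles (1 / (4 * π)) (2 * π * t) =
      tangentCircles (1 / (4 * π)) (2 * π * Int.fract t) := by
    rw [← Int.self_sub_floor, mul_sub, mul_comm (2 * π) (⌊t⌋ : ℝ),
      (tangentCircles.periodic _).sub_int_mul_eq]
  have hdouble : 4 * π * Int.fract t = 2 * (2 * π * Int.fract t) := by ring
  have h1 := Int.fract_lt_one t
  simp only [tpcPi, hfract, hdouble]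
  split_ifs with h
  · have hsin : 0 ≤ sin (2 * π * Int.fract t) :=
      sin_nonneg_of_nonneg_of_le_pi (by positivity) (by nlinarith [pi_pos])
    exact (tangentCircles.eq_of_sin_nonneg _ hsin).symm
  · have hsin : sin (2 * π * Int.fract t) ≤ 0 := by
      rw [← sin_sub_two_pi]
      exact sin_nonpos_of_nonpos_of_neg_pi_le (by nlinarith [pi_pos]) (by nlinarith [pi_pos])
    exact (tangentCircles.eq_of_sin_nonpos _ hsin).symm

lemma deriv_tpcPi :
    deriv tpcPi = fun t => (2 * π) • deriv (tangentCircles (1 / (4 * π))) (2 * π * t) := by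
  rw [tpcPi_eq_tangentCircles]
  exact funext fun t => deriv_comp_mul_left _ _ t

lemma contDiff_tpcPi : ContDiff ℝ 1 tpcPi := by
  rw [tpcPi_eq_tangentCircles]
  exact (tangentCircles.contDiff _).comp (by fun_prop)

lemma norm_deriv_tpcPi (t : ℝ) : ‖deriv tpcPi t‖ = 1 := by
  rw [deriv_tpcPi, norm_smul, tangentCircles.norm_deriv, norm_of_nonneg two_pi_pos.le,
    abs_of_pos (by positivity)]
  field_simp
  norm_num

lemma dihedralSymmetric_tpcPi : DihedralSymmetric 1 tpcPi := by
  rw [tpcPi_eq_tangentCircles]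
  exact .comp_mul_left (by simpa using tangentCircles.dihedralSymmetric _)

lemma sin_two_pi_mul_ne_zero {t : ℝ} (ht : ∀ n : ℤ, t ≠ n / 2) : sin (2 * π * t) ≠ 0 := by
  refine sin_ne_zero_iff.2 fun n hn => ht n ?_
  have : π * (2 * t) = π * n := by linear_combination -hn
  linarith [mul_left_cancel₀ pi_ne_zero this]

lemma differentiableAt_deriv_tpcPi {t : ℝ} (ht : ∀ n : ℤ, t ≠ n / 2) :
    DifferentiableAt ℝ (deriv tpcPi) t := by
  rw [deriv_tpcPi]
  have hd := (tangentCircles.hasDerivAt_deriv (1 / (4 * π))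
    (sin_two_pi_mul_ne_zero ht)).differentiableAt
  exact (hd.comp t (differentiableAt_id.const_mul (2 * π))).const_smul (2 * π)

lemma norm_deriv_deriv_tpcPi {t : ℝ} (ht : ∀ n : ℤ, t ≠ n / 2) :
    ‖deriv (deriv tpcPi) t‖ = 4 * π := by
  rw [deriv_tpcPi, deriv_fun_const_smul_field, deriv_comp_mul_left, norm_smul, norm_smul,
    tangentCircles.norm_deriv_deriv _ (sin_two_pi_mul_ne_zero ht), norm_of_nonneg two_pi_pos.le,
    abs_of_pos (by positivity)]
  field_simp
  norm_num

lemma lipschitzWith_deriv_tpcPi : LipschitzWith (4 * NNReal.pi) (deriv tpcPi) := by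
  have half_integer_ne {t : ℝ} (ht : t ∉ range fun n : ℤ => (n : ℝ) / 2) (n : ℤ) : t ≠ n / 2 :=
    fun h => ht ⟨n, h.symm⟩
  refine lipschitzWith_of_norm_deriv_le_off_countable (countable_range fun n : ℤ => (n : ℝ) / 2)
    (contDiff_tpcPi.continuous_deriv le_rfl)
    (fun t ht => differentiableAt_deriv_tpcPi (half_integer_ne ht)) fun t ht => ?_
  simpa using (norm_deriv_deriv_tpcPi (half_integer_ne ht)).le

lemma range_tpcPi : range tpcPi =
    {x : E3 | x 2 = 0 ∧ ‖x - (1 / (4 * π)) • e1‖ = 1 / (4 * π)} ∪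
      {x : E3 | x 2 = 0 ∧ ‖x + (1 / (4 * π)) • e1‖ = 1 / (4 * π)} := by
  rw [tpcPi_eq_tangentCircles, ← tangentCircles.range_eq (by positivity)]
  exact (mul_left_surjective₀ two_pi_pos.ne').range_comp (tangentCircles _)

/-- The explicit curve `tpc[π]` is continuously differentiable with
Lipschitz continuous derivative, is parametrized by arclength, is D₂-symmetric, its
second derivative exists at all `t ∉ (1/2)ℤ` with norm `4π` there, and its image is the
union of the two circles of radius `1/(4π)` in the plane `{x₃ = 0}` centered at
`±(1/(4π))e₁`, which meet exactly at the origin. -/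
theorem tpcPi_properties :
    ContDiff ℝ 1 tpcPi ∧
    (∃ K : NNReal, LipschitzWith K (deriv tpcPi)) ∧
    (∀ t : ℝ, ‖deriv tpcPi t‖ = 1) ∧
    DihedralSymmetric 1 tpcPi ∧
    (∀ t : ℝ, (∀ n : ℤ, t ≠ (n : ℝ) / 2) →
      DifferentiableAt ℝ (deriv tpcPi) t ∧ ‖deriv (deriv tpcPi) t‖ = 4 * π) ∧
    Set.range tpcPi =
      {x : E3 | x 2 = 0 ∧ ‖x - (1 / (4 * π)) • e1‖ = 1 / (4 * π)} ∪
        {x : E3 | x 2 = 0 ∧ ‖x + (1 / (4 * π)) • e1‖ = 1 / (4 * π)} ∧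
    {x : E3 | x 2 = 0 ∧ ‖x - (1 / (4 * π)) • e1‖ = 1 / (4 * π)} ∩
        {x : E3 | x 2 = 0 ∧ ‖x + (1 / (4 * π)) • e1‖ = 1 / (4 * π)} = {0} := by
  exact ⟨contDiff_tpcPi, ⟨_, lipschitzWith_deriv_tpcPi⟩, norm_deriv_tpcPi, dihedralSymmetric_tpcPi,
    fun _ ht => ⟨differentiableAt_deriv_tpcPi ht, norm_deriv_deriv_tpcPi ht⟩, range_tpcPi,
    coplanar_circles_inter (by positivity)⟩
end
end
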